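/- Let P and Q be partially ordered sets, each having no infinite antichains and satisfying the descending chain condition (no infinite strictly descending chains). If the poset of dual order ideals of P, ordered by inclusion, and the poset of dual order ideals of Q, ordered by inclusion, each have no infinite antichains, then the poset of dual order ideals of the product poset P × Q (with componentwise order), ordered by inclusion, also has no infinite antichains. -/

import Mathlib

/-!
Order the upper sets of `P` by reverse inclusion. If `P` satisfies the descending chain condition,
its upper sets have no infinite antichains exactly when they are well-quasi-ordered, so the point
is that well-quasi-ordering of the upper sets passes to products. A sequence of upper sets none of
which contains a later one comes with an array of witnesses: `f i j`, for `i < j`, lies in the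
`j`-th set but not in the `i`-th, whence `¬ f i j ≤ f j k` for `i < j < k`. So `UpperSet P` is
well-quasi-ordered as soon as every array in `P` has some `i < j < k` with `f i j ≤ f j k`.
Conversely, if `UpperSet P` is well-quasi-ordered, then along a nonprincipal ultrafilter on `ℕ`
every array satisfies `f i j ≤ f j k` for almost all `i`, almost all `j` and almost all `k`:
compare the upper sets generated by the columns of the array. This last property passes to
products, because finite intersections of large sets are large.
-/

open Filter

section Frequently

variable {α ι : Type*}

theorem frequently_frequently_of_wellQuasiOrdered {r : α → α → Prop} (hr : WellQuasiOrdered r)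
    (l : Filter ι) [l.NeBot] (u : ι → α) : ∃ᶠ i in l, ∃ᶠ j in l, r (u i) (u j) := by
  by_contra! h
  obtain ⟨g, -, hg⟩ := exists_seq_of_forall_finset_exists
    (fun i ↦ ∀ᶠ j in l, ¬ r (u i) (u j)) (fun i j ↦ ¬ r (u i) (u j)) fun s hs ↦
      (h.and ((eventually_all_finset s).2 hs)).exists
  obtain ⟨m, n, hmn, hle⟩ := hr (u ∘ g)
  exact hg m n hmn hle

theorem frequently_le_of_wellQuasiOrderedLE_upperSet [Preorder α] [WellQuasiOrderedLE (UpperSet α)]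
    [Preorder ι] [LocallyFiniteOrderBot ι] {l : Filter ι} [l.NeBot] (hl : l ≤ atTop)
    (f : ι → ι → α) : ∃ᶠ i in l, ∃ᶠ j in l, ∃ᶠ k in l, f i j ≤ f j k := by
  by_contra! h
  -- Only entries that are eventually bad generate the upper set `U j` of the `j`-th column.
  let U : ι → UpperSet α := fun j ↦
    upperClosure {x | ∃ i ≤ j, (∀ᶠ k in l, ¬ f i j ≤ f j k) ∧ f i j = x}
  have mem_U : ∀ᶠ j in l, ∀ᶠ k in l, f j k ∈ U k := by
    filter_upwards [h] with j hj
    filter_upwards [hj, hl (eventually_ge_atTop j)] with k hk hjk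
    exact subset_upperClosure ⟨j, hjk, hk, rfl⟩
  have notMem_U (j : ι) : ∀ᶠ k in l, f j k ∉ U j := by
    have hfin : ∀ᶠ k in l, ∀ i ∈ Set.Iic j, (∀ᶠ k in l, ¬ f i j ≤ f j k) → ¬ f i j ≤ f j k :=
      (eventually_all_finite (Set.finite_Iic j)).2 fun i _ ↦ eventually_imp_distrib_left.2 id
    filter_upwards [hfin] with k hk hmem
    obtain ⟨_, ⟨i, hij, hbad, rfl⟩, hle⟩ := mem_upperClosure.1 hmem
    exact hk i hij hbad hle
  refine frequently_frequently_of_wellQuasiOrdered wellQuasiOrdered_le l U ?_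
  filter_upwards [mem_U] with j hj
  simp only [not_frequently]
  filter_upwards [hj, notMem_U j] with k hmem hnotMem hle
  exact hnotMem (hle hmem)

theorem eventually_le_of_wellQuasiOrderedLE_upperSet [Preorder α] [WellQuasiOrderedLE (UpperSet α)]
    [Preorder ι] [LocallyFiniteOrderBot ι] {l : Ultrafilter ι} (hl : (l : Filter ι) ≤ atTop)
    (f : ι → ι → α) : ∀ᶠ i in l, ∀ᶠ j in l, ∀ᶠ k in l, f i j ≤ f j k := by
  simpa only [Ultrafilter.frequently_iff_eventually] using
    frequently_le_of_wellQuasiOrderedLE_upperSet hl f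

end Frequently

theorem wellQuasiOrderedLE_upperSet_of_forall_exists_le {α : Type*} [Preorder α]
    (h : ∀ f : ℕ → ℕ → α, ∃ i j k, i < j ∧ j < k ∧ f i j ≤ f j k) :
    WellQuasiOrderedLE (UpperSet α) := by
  refine ⟨fun U ↦ ?_⟩
  by_contra! hU
  have exists_witness (i j : ℕ) : ∃ x, i < j → x ∈ U j ∧ x ∉ U i := by
    obtain ⟨a, -⟩ := Set.not_subset.1 (hU 0 1 one_pos)
    by_cases hij : i < j
    · obtain ⟨x, hx⟩ := Set.not_subset.1 (hU i j hij)
      exact ⟨x, fun _ ↦ hx⟩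
    · exact ⟨a, fun hlt ↦ absurd hlt hij⟩
  choose f hf using exists_witness
  obtain ⟨i, j, k, hij, hjk, hle⟩ := h f
  exact (hf j k hjk).2 ((U j).upper hle (hf i j hij).1)

theorem wellQuasiOrderedLE_upperSet_prod {α β : Type*} [Preorder α] [Preorder β]
    [WellQuasiOrderedLE (UpperSet α)] [WellQuasiOrderedLE (UpperSet β)] :
    WellQuasiOrderedLE (UpperSet (α × β)) := by
  refine wellQuasiOrderedLE_upperSet_of_forall_exists_le fun f ↦ ?_
  have hl : (hyperfilter ℕ : Filter ℕ) ≤ atTop := Nat.hyperfilter_le_atTop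
  have hfst := eventually_le_of_wellQuasiOrderedLE_upperSet hl fun i j ↦ (f i j).1
  have hsnd := eventually_le_of_wellQuasiOrderedLE_upperSet hl fun i j ↦ (f i j).2
  obtain ⟨i, hi₁, hi₂⟩ := (hfst.and hsnd).exists
  obtain ⟨j, ⟨hj₁, hj₂⟩, hij⟩ := ((hi₁.and hi₂).and (hl (eventually_gt_atTop i))).exists
  obtain ⟨k, hle, hjk⟩ := ((hj₁.and hj₂).and (hl (eventually_gt_atTop j))).exists
  exact ⟨i, j, k, hij, hjk, hle⟩

section Antichain

variable {α : Type*}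

theorem forall_isAntichain_upperSet_finite_iff [LE α] :
    (∀ S : Set (UpperSet α), IsAntichain (· ≤ ·) S → S.Finite) ↔
      ∀ 𝒜 : Set (Set α), (∀ U ∈ 𝒜, IsUpperSet U) → IsAntichain (· ⊆ ·) 𝒜 → 𝒜.Finite := by
  constructor
  · intro h 𝒜 hupper hanti
    have hpre : {U : UpperSet α | (U : Set α) ∈ 𝒜}.Finite :=
      h _ (hanti.flip.preimage SetLike.coe_injective fun _ _ ↦ id)
    exact (hpre.image (↑)).subset fun U hU ↦ ⟨⟨U, hupper U hU⟩, hU, rfl⟩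
  · intro h S hS
    refine Set.Finite.of_finite_image (h ((↑) '' S) ?_ ?_) SetLike.coe_injective.injOn
    · rintro _ ⟨U, -, rfl⟩
      exact U.upper
    · exact hS.flip.image _ fun _ _ ↦ id

variable [Preorder α]

theorem wellFoundedLT_upperSet [WellQuasiOrderedLE α] : WellFoundedLT (UpperSet α) := by
  refine ⟨wellFounded_iff_isEmpty_descending_chain.2 ⟨fun ⟨U, hU⟩ ↦ ?_⟩⟩
  choose x hx_mem hx_notMem using fun n ↦ Set.not_subset.1 (hU n).not_ge
  obtain ⟨m, n, hmn, hle⟩ := wellQuasiOrdered_le x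
  have hU_anti : Antitone U := antitone_nat_of_succ_le fun n ↦ (hU n).le
  exact hx_notMem n (hU_anti (Nat.succ_le_of_lt hmn) ((U (m + 1)).upper hle (hx_mem m)))

theorem wellQuasiOrderedLE_upperSet_of_antichains_finite [WellFoundedLT α]
    (h : ∀ S : Set (UpperSet α), IsAntichain (· ≤ ·) S → S.Finite) :
    WellQuasiOrderedLE (UpperSet α) := by
  have le_of_Ici_le {a b : α} (hab : UpperSet.Ici a ≤ UpperSet.Ici b) : a ≤ b :=
    UpperSet.mem_Ici_iff.1 (UpperSet.le_Ici.1 hab)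
  have antichains_finite (s : Set α) (hs : IsAntichain (· ≤ ·) s) : s.Finite := by
    refine Set.Finite.of_finite_image (h (UpperSet.Ici '' s) ?_) ?_
    · exact hs.image _ fun _ _ ↦ le_of_Ici_le
    · exact fun a ha b hb hab ↦ hs.eq ha hb (le_of_Ici_le hab.le)
  have : WellQuasiOrderedLE α := wellQuasiOrderedLE_iff.2 ⟨inferInstance, antichains_finite⟩
  exact wellQuasiOrderedLE_iff.2 ⟨wellFoundedLT_upperSet, h⟩

theorem wellQuasiOrderedLE_upperSet_of_dcc (hdcc : ¬ ∃ f : ℕ → α, ∀ m : ℕ, f (m + 1) < f m)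
    (hup : ∀ 𝒜 : Set (Set α), (∀ U ∈ 𝒜, IsUpperSet U) → IsAntichain (· ⊆ ·) 𝒜 → 𝒜.Finite) :
    WellQuasiOrderedLE (UpperSet α) := by
  have : WellFoundedLT α :=
    ⟨wellFounded_iff_isEmpty_descending_chain.2 ⟨fun f ↦ hdcc ⟨f.1, f.2⟩⟩⟩
  exact wellQuasiOrderedLE_upperSet_of_antichains_finite
    (forall_isAntichain_upperSet_finite_iff.2 hup)

end Antichain

theorem farley_schmidt_general {P Q : Type*} [Preorder P] [Preorder Q]
    (hPdcc : ¬ ∃ f : ℕ → P, ∀ m : ℕ, f (m + 1) < f m)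
    (hQdcc : ¬ ∃ f : ℕ → Q, ∀ m : ℕ, f (m + 1) < f m)
    (hPup : ∀ 𝒜 : Set (Set P), (∀ U ∈ 𝒜, IsUpperSet U) →
      IsAntichain (· ⊆ ·) 𝒜 → 𝒜.Finite)
    (hQup : ∀ 𝒜 : Set (Set Q), (∀ U ∈ 𝒜, IsUpperSet U) →
      IsAntichain (· ⊆ ·) 𝒜 → 𝒜.Finite) :
    ∀ 𝒜 : Set (Set (P × Q)), (∀ U ∈ 𝒜, IsUpperSet U) →
      IsAntichain (· ⊆ ·) 𝒜 → 𝒜.Finite := by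
  have := wellQuasiOrderedLE_upperSet_of_dcc hPdcc hPup
  have := wellQuasiOrderedLE_upperSet_of_dcc hQdcc hQup
  have : WellQuasiOrderedLE (UpperSet (P × Q)) := wellQuasiOrderedLE_upperSet_prod
  exact forall_isAntichain_upperSet_finite_iff.1 fun _ ↦ WellQuasiOrderedLE.finite_of_isAntichain

/-- **Farley–Schmidt theorem.**  Let `P` and `Q` be posets with no infinite
antichains satisfying the descending chain condition.  If the posets of dual
order ideals (upper sets) of `P` and of `Q`, ordered by inclusion, have no
infinite antichains, then the same is true for the poset of dual order ideals of
the product poset `P × Q`. -/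
theorem farley_schmidt {P Q : Type*} [PartialOrder P] [PartialOrder Q]
    (hPac : ∀ A : Set P, IsAntichain (· ≤ ·) A → A.Finite)
    (hQac : ∀ A : Set Q, IsAntichain (· ≤ ·) A → A.Finite)
    (hPdcc : ¬ ∃ f : ℕ → P, ∀ m : ℕ, f (m + 1) < f m)
    (hQdcc : ¬ ∃ f : ℕ → Q, ∀ m : ℕ, f (m + 1) < f m)
    (hPup : ∀ 𝒜 : Set (Set P), (∀ U ∈ 𝒜, IsUpperSet U) →
      IsAntichain (· ⊆ ·) 𝒜 → 𝒜.Finite)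
    (hQup : ∀ 𝒜 : Set (Set Q), (∀ U ∈ 𝒜, IsUpperSet U) →
      IsAntichain (· ⊆ ·) 𝒜 → 𝒜.Finite) :
    ∀ 𝒜 : Set (Set (P × Q)), (∀ U ∈ 𝒜, IsUpperSet U) →
      IsAntichain (· ⊆ ·) 𝒜 → 𝒜.Finite :=
  farley_schmidt_general hPdcc hQdcc hPup hQup
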